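/- Let D ≥ 2, let u be a unit vector in ℝ^D, and let θ ∈ [0, π/2]. Then the Lebesgue volume of the hyperspherical sector {w ∈ ℝ^D : ‖w‖ ≤ 1, w ≠ 0, ∠(w,u) ≤ θ} equals (1/2)·V(B_1)·I_{sin²θ}((D−1)/2, 1/2), where V(B_1) is the volume of the D-dimensional unit ball. -/

import Mathlib

open scoped RealInnerProductSpace
open MeasureTheory

/-- The regularized incomplete beta function
`I_x(a,b) = (∫_0^x t^(a-1) (1-t)^(b-1) dt) * Γ(a+b) / (Γ(a) Γ(b))`. -/
noncomputable def regIncompleteBeta (x a b : ℝ) : ℝ :=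
  (∫ t in (0:ℝ)..x, t ^ (a - 1) * (1 - t) ^ (b - 1)) *
    (Real.Gamma (a + b) / (Real.Gamma a * Real.Gamma b))

lemma beta_aux (m : ℕ) (θ : ℝ) (h0 : 0 ≤ θ) (h1 : θ ≤ Real.pi / 2) :
    (∫ t in (0:ℝ)..(Real.sin θ ^ 2), t ^ (((m:ℝ) + 1) / 2 - 1) * (1 - t) ^ ((1:ℝ) / 2 - 1)) =
      2 * ∫ x in (0:ℝ)..θ, Real.sin x ^ m := by
  have hmono : StrictMonoOn (fun x => Real.sin x ^ 2) (Set.Icc 0 (Real.pi / 2)) := by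
    intro x hx y hy hxy
    have := Real.sin_lt_sin_of_lt_of_le_pi_div_two (by linarith [hx.1]) hy.2 hxy
    have := Real.sin_nonneg_of_nonneg_of_le_pi hx.1 (by linarith [hx.2, Real.pi_pos])
    simp only; nlinarith
  have himg : (fun x => Real.sin x ^ 2) '' Set.Ioo 0 θ = Set.Ioo 0 (Real.sin θ ^ 2) := by
    apply Set.Subset.antisymm
    · rintro _ ⟨x, hx, rfl⟩
      have a := hmono ⟨le_rfl, by linarith⟩ ⟨hx.1.le, by linarith [hx.2]⟩ hx.1
      have b := hmono ⟨hx.1.le, by linarith [hx.2]⟩ ⟨h0, h1⟩ hx.2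
      simp at a b
      exact ⟨by simpa using a, b⟩
    · have := intermediate_value_Ioo (f := fun x => Real.sin x ^ 2) h0 (by fun_prop)
      simpa using this
  rw [intervalIntegral.integral_of_le (by positivity), intervalIntegral.integral_of_le h0,
    integral_Ioc_eq_integral_Ioo, integral_Ioc_eq_integral_Ioo, ← himg,
    integral_image_eq_integral_abs_deriv_smul (f' := fun x => 2 * Real.sin x * Real.cos x)
      measurableSet_Ioo, ← integral_const_mul]
  · apply setIntegral_congr_fun measurableSet_Ioo
    intro x hx
    have hs : 0 < Real.sin x := Real.sin_pos_of_pos_of_lt_pi hx.1 (by linarith [hx.2, Real.pi_pos])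
    have hc : 0 < Real.cos x := Real.cos_pos_of_mem_Ioo ⟨by linarith [hx.1, Real.pi_pos], by linarith [hx.2]⟩
    have e1 : (Real.sin x ^ 2) ^ (((m:ℝ) + 1) / 2 - 1) = Real.sin x ^ m / Real.sin x := by
      rw [← Real.rpow_natCast (Real.sin x) 2, ← Real.rpow_mul hs.le, ← Real.rpow_natCast _ m,
        ← Real.rpow_sub_one hs.ne']
      congr 1; push_cast; ring
    have e2 : (1 - Real.sin x ^ 2) ^ ((1:ℝ) / 2 - 1) = 1 / Real.cos x := by
      rw [← Real.cos_sq', ← Real.rpow_natCast (Real.cos x) 2, ← Real.rpow_mul hc.le]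
      norm_num [Real.rpow_neg_one]
    change |2 * Real.sin x * Real.cos x| * ((Real.sin x ^ 2) ^ (((m:ℝ) + 1) / 2 - 1) * (1 - Real.sin x ^ 2) ^ ((1:ℝ) / 2 - 1)) = 2 * Real.sin x ^ m
    rw [e1, e2, abs_of_pos (by positivity)]
    field_simp
  · intro x hx
    have := ((Real.hasDerivAt_sin x).pow 2).hasDerivWithinAt (s := Set.Ioo 0 θ)
    refine (this.congr_deriv ?_)
    simp
  · exact hmono.injOn.mono (fun x (hx : x ∈ Set.Ioo 0 θ) =>
      (⟨hx.1.le, by linarith [hx.2]⟩ : x ∈ Set.Icc 0 (Real.pi / 2)))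

lemma cos_sub_aux (n : ℕ) (θ : ℝ) (h0 : 0 ≤ θ) (h1 : θ ≤ Real.pi / 2) :
    ∫ s in (Real.cos θ)..1, (√(1 - s ^ 2)) ^ n = ∫ x in (0:ℝ)..θ, Real.sin x ^ (n + 1) := by
  have h := intervalIntegral.integral_comp_mul_deriv (a := θ) (b := 0) (f := Real.cos)
    (f' := fun x => - Real.sin x) (g := fun s => (√(1 - s ^ 2)) ^ n)
    (fun x _ => Real.hasDerivAt_cos x) (by fun_prop) (by fun_prop)
  rw [Real.cos_zero] at h
  rw [← h, intervalIntegral.integral_symm, ← intervalIntegral.integral_neg]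
  apply intervalIntegral.integral_congr
  intro x hx
  rw [Set.uIcc_of_le h0] at hx
  have hs : 0 ≤ Real.sin x :=
    Real.sin_nonneg_of_nonneg_of_le_pi hx.1 (by linarith [hx.2, Real.pi_pos])
  simp only [Function.comp]
  rw [← Real.sin_sq, Real.sqrt_sq hs]
  ring

lemma lin_aux (n : ℕ) (θ : ℝ) :
    ∫ s in (0:ℝ)..(Real.cos θ), (s * Real.tan θ) ^ n = Real.sin θ ^ n * Real.cos θ / (n + 1) := by
  simp_rw [mul_pow]
  rw [intervalIntegral.integral_mul_const, integral_pow]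
  by_cases hc : Real.cos θ = 0
  · simp [hc]
  · rw [Real.tan_eq_sin_div_cos, div_pow]; simp; field_simp; ring

lemma total_aux (m : ℕ) (θ : ℝ) (h0 : 0 ≤ θ) (h1 : θ ≤ Real.pi / 2) :
    (∫ s in (0:ℝ)..(Real.cos θ), (s * Real.tan θ) ^ (m + 1)) +
      ∫ s in (Real.cos θ)..1, (√(1 - s ^ 2)) ^ (m + 1) =
    (m + 1) / (m + 2) * ∫ x in (0:ℝ)..θ, Real.sin x ^ m := by
  rw [cos_sub_aux _ θ h0 h1, lin_aux, integral_sin_pow]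
  push_cast
  simp
  field_simp
  ring

lemma const_aux (m : ℕ) : (m + 1) / (m + 2) * (√Real.pi ^ (m+1) / Real.Gamma (((m+1 : ℕ):ℝ) / 2 + 1)) =
   (Real.Gamma (((m:ℝ)+1)/2 + 1/2) / (Real.Gamma (((m:ℝ)+1)/2) * Real.Gamma (1/2)))
    * (√Real.pi ^ (m+2) / Real.Gamma (((m+2 : ℕ):ℝ) / 2 + 1)) := by
  push_cast
  have a : (0:ℝ) < ((m:ℝ)+1)/2 := by positivity
  have b : (0:ℝ) < ((m:ℝ)+2)/2 := by positivity
  rw [Real.Gamma_add_one a.ne', Real.Gamma_add_one b.ne', Real.Gamma_one_half_eq,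
    show ((m:ℝ)+1)/2 + 1/2 = ((m:ℝ)+2)/2 by ring]
  have := Real.Gamma_pos_of_pos a
  have := Real.Gamma_pos_of_pos b
  have : 0 < √Real.pi := Real.sqrt_pos.2 Real.pi_pos
  field_simp
  ring

lemma slice_aux (m : ℕ) (θ s : ℝ) (h0 : 0 ≤ θ) (h1 : θ ≤ Real.pi / 2) :
    {y : EuclideanSpace ℝ (Fin (m+1)) | √(s^2+‖y‖^2) ≤ 1 ∧ Real.cos θ * √(s^2+‖y‖^2) ≤ s} =
     if s ∈ Set.Ico 0 (Real.cos θ) then Metric.closedBall 0 (s * Real.tan θ)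
     else if s ∈ Set.Icc (Real.cos θ) 1 then Metric.closedBall 0 (√(1 - s ^ 2)) else ∅ := by
  have hc : 0 ≤ Real.cos θ := Real.cos_nonneg_of_mem_Icc ⟨by linarith [Real.pi_pos], h1⟩
  have hs : 0 ≤ Real.sin θ := Real.sin_nonneg_of_nonneg_of_le_pi h0 (by linarith [Real.pi_pos])
  have hsc := Real.sin_sq_add_cos_sq θ
  ext y
  have hq : 0 ≤ s^2+‖y‖^2 := by positivity
  set r := ‖y‖ with hr
  have hr0 : 0 ≤ r := norm_nonneg y
  rw [Set.mem_ofPred_eq, Real.sqrt_le_iff, and_iff_right (zero_le_one' ℝ), one_pow]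
  have key : Real.cos θ * √(s^2+r^2) ≤ s ↔ 0 ≤ s ∧ Real.cos θ * r ≤ Real.sin θ * s := by
    constructor
    · intro h
      have h2 : 0 ≤ s := le_trans (by positivity) h
      refine ⟨h2, abs_le_of_sq_le_sq' ?_ (by positivity) |>.2⟩
      have := pow_le_pow_left₀ (by positivity) h 2
      rw [mul_pow, Real.sq_sqrt hq] at this
      nlinarith
    · rintro ⟨h2, h⟩
      refine abs_le_of_sq_le_sq' ?_ h2 |>.2
      rw [mul_pow, Real.sq_sqrt hq]
      have := pow_le_pow_left₀ (by positivity) h 2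
      nlinarith
  rw [key]
  split_ifs with ha hb
  · have hcp : 0 < Real.cos θ := ha.1.trans_lt ha.2
    rw [mem_closedBall_zero_iff, ← hr, Real.tan_eq_sin_div_cos, ← mul_div_assoc, le_div_iff₀ hcp]
    constructor
    · rintro ⟨_, _, h⟩; linarith
    · intro h
      refine ⟨?_, ha.1, by linarith⟩
      have h2 := pow_le_pow_left₀ (by positivity) h 2
      have h3 := pow_le_pow_left₀ ha.1 ha.2.le 2
      have : (s^2+r^2) * Real.cos θ ^ 2 ≤ 1 * Real.cos θ ^ 2 := by nlinarith
      exact le_of_mul_le_mul_right this (by positivity)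
  · have hs0 : 0 ≤ s := hc.trans hb.1
    have h1s : 0 ≤ 1 - s ^ 2 := by nlinarith [hb.2]
    have hle : r ≤ √(1 - s ^ 2) ↔ r ^ 2 ≤ 1 - s ^ 2 := by
      rw [← Real.sqrt_le_sqrt_iff h1s, Real.sqrt_sq hr0]
    rw [mem_closedBall_zero_iff, ← hr, hle]
    constructor
    · rintro ⟨h, _⟩; linarith
    · intro h
      refine ⟨by linarith, hs0, ?_⟩
      have : r ≤ Real.sin θ := by
        refine abs_le_of_sq_le_sq' ?_ hs |>.2
        have h3 := pow_le_pow_left₀ hc hb.1 2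
        linarith
      nlinarith [hb.1]
  · simp only [Set.mem_empty_iff_false, iff_false]
    rintro ⟨h, h2, _⟩
    have : s ≤ 1 := abs_le_of_sq_le_sq' (by nlinarith) (by norm_num) |>.2
    simp only [Set.mem_Ico, Set.mem_Icc] at ha hb
    by_cases h' : s < Real.cos θ
    · exact ha ⟨h2, h'⟩
    · exact hb ⟨not_lt.1 h', this⟩

lemma volT (m : ℕ) (θ : ℝ) (h0 : 0 ≤ θ) (h1 : θ ≤ Real.pi / 2) :
    volume {p : ℝ × EuclideanSpace ℝ (Fin (m+1)) | √(p.1^2+‖p.2‖^2) ≤ 1 ∧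
      Real.cos θ * √(p.1^2+‖p.2‖^2) ≤ p.1} =
    ENNReal.ofReal ((m + 1) / (m + 2) * ∫ x in (0:ℝ)..θ, Real.sin x ^ m) *
      ENNReal.ofReal (√Real.pi ^ (m+1) / Real.Gamma (((m+1 : ℕ):ℝ) / 2 + 1)) := by
  have hc : 0 ≤ Real.cos θ := Real.cos_nonneg_of_mem_Icc ⟨by linarith [Real.pi_pos], h1⟩
  have ht : 0 ≤ Real.tan θ := Real.tan_nonneg_of_nonneg_of_le_pi_div_two h0 h1
  have hT : MeasurableSet {p : ℝ × EuclideanSpace ℝ (Fin (m+1)) | √(p.1^2+‖p.2‖^2) ≤ 1 ∧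
      Real.cos θ * √(p.1^2+‖p.2‖^2) ≤ p.1} := by
    apply IsClosed.measurableSet
    simp only [Set.ofPred_and]
    exact (isClosed_le (by fun_prop) (by fun_prop)).inter (isClosed_le (by fun_prop) (by fun_prop))
  set K := ENNReal.ofReal (√Real.pi ^ (m+1) / Real.Gamma (((m+1 : ℕ):ℝ) / 2 + 1)) with hK
  rw [Measure.volume_eq_prod, Measure.prod_apply hT]
  have : ∀ s : ℝ, volume (Prod.mk s ⁻¹' {p : ℝ × EuclideanSpace ℝ (Fin (m+1)) |
      √(p.1^2+‖p.2‖^2) ≤ 1 ∧ Real.cos θ * √(p.1^2+‖p.2‖^2) ≤ p.1}) =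
      ((Set.Ico 0 (Real.cos θ)).indicator (fun s => ENNReal.ofReal ((s * Real.tan θ)^(m+1))) s +
       (Set.Icc (Real.cos θ) 1).indicator (fun s => ENNReal.ofReal ((√(1-s^2))^(m+1))) s) * K := by
    intro s
    have := slice_aux m θ s h0 h1
    simp only [Set.preimage_ofPred_eq]
    rw [this]
    split_ifs with ha hb
    · rw [EuclideanSpace.volume_closedBall, Set.indicator_of_mem ha,
        Set.indicator_of_notMem (fun h => absurd h.1 (not_le.2 ha.2)), add_zero,
        ENNReal.ofReal_pow (mul_nonneg ha.1 ht)]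
      simp [hK]
    · rw [EuclideanSpace.volume_closedBall, Set.indicator_of_mem hb,
        Set.indicator_of_notMem ha, zero_add,
        ENNReal.ofReal_pow (Real.sqrt_nonneg _)]
      simp [hK]
    · rw [Set.indicator_of_notMem ha, Set.indicator_of_notMem hb]; simp
  simp_rw [this]
  rw [lintegral_mul_const _ (by
    refine Measurable.add (Measurable.indicator (by fun_prop) measurableSet_Ico)
      (Measurable.indicator (by fun_prop) measurableSet_Icc))]
  congr 1
  rw [lintegral_add_left (Measurable.indicator (by fun_prop) measurableSet_Ico),
    lintegral_indicator measurableSet_Ico, lintegral_indicator measurableSet_Icc,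
    ← total_aux m θ h0 h1, intervalIntegral.integral_of_le hc,
    intervalIntegral.integral_of_le (Real.cos_le_one θ), integral_Ioc_eq_integral_Ioo,
    ← integral_Ico_eq_integral_Ioo, ← integral_Icc_eq_integral_Ioc, ENNReal.ofReal_add,
    ofReal_integral_eq_lintegral_ofReal, ofReal_integral_eq_lintegral_ofReal]
  · exact (Continuous.integrableOn_Icc (by fun_prop))
  · exact Filter.Eventually.of_forall fun s => by positivity
  · exact (Continuous.integrableOn_Icc (by fun_prop)).mono_set Set.Ico_subset_Icc_self
  · refine (ae_restrict_iff' measurableSet_Ico).2 (Filter.Eventually.of_forall fun s hs => ?_)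
    exact pow_nonneg (mul_nonneg hs.1 ht) _
  · exact setIntegral_nonneg measurableSet_Ico fun s hs => pow_nonneg (mul_nonneg hs.1 ht) _
  · exact setIntegral_nonneg measurableSet_Icc fun s hs => by positivity

/-- the Lebesgue volume of the hyperspherical sector of colatitude `θ`
around a unit vector `u` equals `(1/2) · V(B₁) · I_{sin²θ}((D-1)/2, 1/2)`. -/
theorem stmt_3 (D : ℕ) (hD : 2 ≤ D)
    (u : EuclideanSpace ℝ (Fin D)) (hu : ‖u‖ = 1)
    (θ : ℝ) (hθ0 : 0 ≤ θ) (hθ1 : θ ≤ Real.pi / 2) :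
    volume {w : EuclideanSpace ℝ (Fin D) |
        ‖w‖ ≤ 1 ∧ w ≠ 0 ∧ InnerProductGeometry.angle w u ≤ θ} =
    ENNReal.ofReal ((1 / 2) * regIncompleteBeta (Real.sin θ ^ 2) (((D : ℝ) - 1) / 2) (1 / 2))
      * volume (Metric.closedBall (0 : EuclideanSpace ℝ (Fin D)) 1) := by
  obtain ⟨m, rfl⟩ : ∃ m, D = m + 2 := ⟨D - 2, by omega⟩
  obtain ⟨b, hb⟩ := Orthonormal.exists_orthonormalBasis_extension_of_card_eq (𝕜 := ℝ)
    (E := EuclideanSpace ℝ (Fin (m+2))) (ι := Fin (m+2)) (by simp) (v := fun _ => u) (s := {0})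
    (by
      refine ⟨fun i => by simpa using hu, ?_⟩
      intro i j hij
      exact absurd (Subsingleton.elim i j) hij)
  have hb0 : b 0 = u := hb 0 rfl
  have hI : 0 ≤ ∫ x in (0:ℝ)..θ, Real.sin x ^ m :=
    intervalIntegral.integral_nonneg hθ0 fun x hx =>
      pow_nonneg (Real.sin_nonneg_of_nonneg_of_le_pi hx.1 (by linarith [hx.2, Real.pi_pos])) _
  have hΦ := ((MeasurePreserving.id (volume : Measure ℝ)).prod
    (PiLp.volume_preserving_toLp (Fin (m+1)))).comp
    ((volume_preserving_piFinSuccAbove (fun _ : Fin (m+2) => ℝ) 0).comp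
      ((PiLp.volume_preserving_ofLp (Fin (m+2))).comp b.measurePreserving_repr))
  set T := {p : ℝ × EuclideanSpace ℝ (Fin (m+1)) | √(p.1^2+‖p.2‖^2) ≤ 1 ∧
      Real.cos θ * √(p.1^2+‖p.2‖^2) ≤ p.1} with hTdef
  have hT : MeasurableSet T := by
    apply IsClosed.measurableSet
    simp only [hTdef, Set.ofPred_and]
    exact (isClosed_le (by fun_prop) (by fun_prop)).inter (isClosed_le (by fun_prop) (by fun_prop))
  have hvol := hΦ.measure_preimage hT.nullMeasurableSet
  have hset : {w : EuclideanSpace ℝ (Fin (m+2)) |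
        ‖w‖ ≤ 1 ∧ w ≠ 0 ∧ InnerProductGeometry.angle w u ≤ θ} =
      {w : EuclideanSpace ℝ (Fin (m+2)) | ‖w‖ ≤ 1 ∧ Real.cos θ * ‖w‖ ≤ ⟪u, w⟫} \ {0} := by
    ext w
    simp only [Set.mem_ofPred_eq, Set.mem_sdiff, Set.mem_singleton_iff]
    rw [and_assoc, and_comm (b := ¬ w = 0)]
    refine and_congr_right fun _ => and_congr_right fun hw => ?_
    have hw' : 0 < ‖w‖ := norm_pos_iff.2 hw
    rw [← Real.strictAntiOn_cos.le_iff_ge ⟨hθ0, by linarith [Real.pi_pos]⟩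
      ⟨InnerProductGeometry.angle_nonneg _ _, InnerProductGeometry.angle_le_pi _ _⟩,
      InnerProductGeometry.cos_angle, hu, mul_one, le_div_iff₀ hw', real_inner_comm]
  have hpre : {w : EuclideanSpace ℝ (Fin (m+2)) | ‖w‖ ≤ 1 ∧ Real.cos θ * ‖w‖ ≤ ⟪u, w⟫} =
      (Prod.map id (WithLp.toLp 2) ∘
      (MeasurableEquiv.piFinSuccAbove (fun _ : Fin (m+2) => ℝ) 0) ∘ WithLp.ofLp ∘ b.repr) ⁻¹' T := by
    ext w
    have e1 : b.repr w 0 = ⟪u, w⟫ := by rw [b.repr_apply_apply, hb0]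
    have e2 : √(⟪u, w⟫ ^ 2 + ‖(WithLp.toLp 2 fun j : Fin (m+1) => b.repr w j.succ :
        EuclideanSpace ℝ (Fin (m+1)))‖^2) = ‖w‖ := by
      rw [← b.repr.norm_map w, ← Real.sqrt_sq (norm_nonneg (b.repr w)),
        EuclideanSpace.real_norm_sq_eq, EuclideanSpace.real_norm_sq_eq,
        Fin.sum_univ_succ (n := m + 1), ← e1]
    have e3 : (Prod.map id (WithLp.toLp 2) ∘
      (MeasurableEquiv.piFinSuccAbove (fun _ : Fin (m+2) => ℝ) 0) ∘ WithLp.ofLp ∘ b.repr) w =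
      (⟪u, w⟫, (WithLp.toLp 2 fun j : Fin (m+1) => b.repr w j.succ :
        EuclideanSpace ℝ (Fin (m+1)))) := by
      rw [← e1]; rfl
    rw [Set.mem_preimage, e3, hTdef, Set.mem_ofPred_eq, Set.mem_ofPred_eq]
    simp only [e2]
  rw [hset, measure_sdiff_null (measure_singleton _), hpre]
  refine Eq.trans hvol ?_
  rw [← Measure.volume_eq_prod, volT m θ hθ0 hθ1, EuclideanSpace.volume_closedBall, ENNReal.ofReal_one, one_pow, one_mul,
    Fintype.card_fin, ← ENNReal.ofReal_mul (by positivity), regIncompleteBeta]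
  have e : (((m + 2 : ℕ) : ℝ) - 1) / 2 = ((m:ℝ) + 1) / 2 := by push_cast; ring
  rw [e, beta_aux m θ hθ0 hθ1, ← ENNReal.ofReal_mul]
  · congr 1
    have := const_aux m
    linear_combination (∫ x in (0:ℝ)..θ, Real.sin x ^ m) * this
  · have a := Real.Gamma_pos_of_pos (show (0:ℝ) < ((m:ℝ)+1)/2 by positivity)
    have b := Real.Gamma_pos_of_pos (show (0:ℝ) < ((m:ℝ)+1)/2 + 1/2 by positivity)
    have c := Real.Gamma_pos_of_pos (show (0:ℝ) < 1/2 by positivity)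
    positivity
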